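/- arXiv:1909.01516 — 2 statements merged into one kernel-verified Lean document; each statement's English description precedes it below -/
import Mathlib

section
/- Let H be a frustration-free Hamiltonian on a chain of n qudits as in the setup, with L layers, coarse-grained detectability operator DL(t) and detectability-lemma operator DL(H), for a coarse-graining parameter t with 8L² < t < n/5. Then for any polynomial F of degree at most ⌈t/(8L)⌉ with F(1) = 1, DL(t) = (∏_k (1 − Q_{S_k})) · F(DL(H)† DL(H)) · (∏_k (1 − Q_{T_k})). -/
open scoped ComplexOrder
open scoped Fin.NatCast

variable {E : Type*} [NormedAddCommGroup E] [InnerProductSpace ℂ E] [FiniteDimensional ℂ E]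

/-- An orthogonal projector: a self-adjoint idempotent operator. -/
def IsProjector (P : E →L[ℂ] E) : Prop := IsSelfAdjoint P ∧ P * P = P

/-- The smallest nonzero (for a positive semidefinite operator, smallest positive)
eigenvalue of an operator. -/
noncomputable def minNonzeroEig (A : E →L[ℂ] E) : ℝ :=
  sInf {c : ℝ | 0 < c ∧ ∃ v : E, v ≠ 0 ∧ A v = (c : ℂ) • v}

/-- The Loewner order: `A ⪯ B` iff `B − A` is positive semidefinite. -/
def Loewner (A B : E →L[ℂ] E) : Prop := (B - A).IsPositive

/-- The contiguous (cyclic) segment of `t` qudits starting at qudit `a` of the chain. -/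
def seg {n : ℕ} [NeZero n] (a : Fin n) (t : ℕ) : Finset (Fin n) :=
  (Finset.range t).image (fun k : ℕ => a + (k : Fin n))

/-- The bond `(i, i+1)` lies inside the region `F`. -/
def bondIn {n : ℕ} [NeZero n] (i : Fin n) (F : Finset (Fin n)) : Prop := i ∈ F ∧ i + 1 ∈ F

instance {n : ℕ} [NeZero n] (F : Finset (Fin n)) : DecidablePred (fun i => bondIn i F) :=
  fun i => inferInstanceAs (Decidable (i ∈ F ∧ i + 1 ∈ F))

/-- A frustration-free nearest-neighbour Hamiltonian `H = Σ_{i=1}^n H_i`,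
`H_i = Σ_j P_{ij}`, on a (cyclic) chain of `n` qudits whose joint Hilbert space is `E`:
the `P_{ij}` are orthogonal projectors supported on the qudits `i, i+1`, each failing to
commute with at most `g` other members of the family, and the family is partitioned into
`L` layers of pairwise commuting projectors. -/
structure ChainSetup (n : ℕ) [NeZero n] (E : Type*) [NormedAddCommGroup E]
    [InnerProductSpace ℂ E] [FiniteDimensional ℂ E] where
  /-- the number of projectors making up the interaction `H_i` on the bond `(i, i+1)` -/
  m : Fin n → ℕ
  /-- the projectors `P_{ij}`, supported on the qudits `i, i+1` -/
  P : (i : Fin n) → Fin (m i) → (E →L[ℂ] E)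
  /-- the noncommutation degree -/
  g : ℕ
  /-- the number of layers -/
  L : ℕ
  /-- the assignment of each projector to a layer -/
  layer : ((i : Fin n) × Fin (m i)) → Fin L
  proj : ∀ i j, IsProjector (P i j)
  /-- operational form of two-body locality: interactions on disjoint bonds commute -/
  locality : ∀ (i i' : Fin n) (j : Fin (m i)) (j' : Fin (m i')),
    Disjoint ({i, i + 1} : Finset (Fin n)) ({i', i' + 1} : Finset (Fin n)) →
    Commute (P i j) (P i' j')
  /-- each projector fails to commute with at most `g` other members of the family -/
  gbound : ∀ p : (i : Fin n) × Fin (m i),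
    Nat.card {q : (i : Fin n) × Fin (m i) // q ≠ p ∧ ¬ Commute (P p.1 p.2) (P q.1 q.2)} ≤ g
  /-- projectors within each layer pairwise commute -/
  layers : ∀ p q : (i : Fin n) × Fin (m i), layer p = layer q →
    Commute (P p.1 p.2) (P q.1 q.2)
  /-- frustration-freeness: there is a nonzero state annihilated by every `P_{ij}` -/
  frustFree : ∃ v : E, v ≠ 0 ∧ ∀ i j, P i j v = 0

namespace ChainSetup

variable {n : ℕ} [NeZero n]

/-- the bond interaction `H_i = Σ_j P_{ij}` -/
noncomputable def Hbond (C : ChainSetup n E) (i : Fin n) : E →L[ℂ] E := ∑ j, C.P i j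

/-- the full Hamiltonian `H = Σ_i H_i` -/
noncomputable def Hfull (C : ChainSetup n E) : E →L[ℂ] E := ∑ i, C.Hbond i

/-- `h_F = Σ_{i : i,i+1 ∈ F} H_i`, the Hamiltonian restricted to the region `F` -/
noncomputable def hamOn (C : ChainSetup n E) (F : Finset (Fin n)) : E →L[ℂ] E :=
  ∑ i ∈ Finset.univ.filter (fun i => bondIn i F), C.Hbond i

/-- the spectral gap `γ` of `H` -/
noncomputable def gap (C : ChainSetup n E) : ℝ := minNonzeroEig C.Hfull

/-- The local gap `γ(t)`: the minimum of the spectral gaps of `h_S` over contiguous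
segments `S` of length `t`.  For the open chain (`openBC = true`) only segments that do
not wrap around the end of the chain are allowed. -/
noncomputable def localGap (C : ChainSetup n E) (openBC : Bool) (t : ℕ) : ℝ :=
  sInf {x : ℝ | ∃ a : Fin n, (openBC = true → (a : ℕ) + t ≤ n) ∧
    x = minNonzeroEig (C.hamOn (seg a t))}

/-- `Q_F`: the orthogonal projector onto the orthogonal complement of the ground space of
`h_F` (for `F = ∅` this is `0`). -/
noncomputable def Qproj (C : ChainSetup n E) (F : Finset (Fin n)) : E →L[ℂ] E :=
  (LinearMap.ker (C.hamOn F : E →ₗ[ℂ] E))ᗮ.subtypeL ∘L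
    Submodule.orthogonalProjectionOnto (LinearMap.ker (C.hamOn F : E →ₗ[ℂ] E))ᗮ

end ChainSetup

/-- the cyclic successor on `Fin M` -/
def cyc {M : ℕ} (k : Fin M) : Fin M := ⟨((k : ℕ) + 1) % M, Nat.mod_lt _ k.pos⟩

/-- A coarse-graining configuration with parameter `t` on a chain of `n` qudits:
`⌊n/t⌋` pairwise disjoint contiguous segments `S_k = seg (s k) t` of length `t` in cyclic
order, with `r_k ≤ t/4` qudits between consecutive segments, and pairwise disjoint
contiguous segments `T_k` of length `t` placed between consecutive `S`-segments, each
overlapping `S_k` and `S_{k+1}` in at least `⌊t/4⌋` qudits.  For the open chain, exactly the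
last `T`-segment is empty, `S_1` starts at the first qudit and `S_{⌊n/t⌋}` ends at the last
qudit. -/
structure CoarseGraining (n : ℕ) [NeZero n] (t : ℕ) where
  /-- the number of `S`-segments, `⌊n/t⌋` -/
  M : ℕ
  hM : M = n / t
  hMpos : 0 < M
  /-- the starting points of the `S`-segments -/
  s : Fin M → Fin n
  /-- the numbers `r_k` of qudits sandwiched between consecutive `S`-segments -/
  r : Fin M → ℕ
  hr : ∀ k, 4 * r k ≤ t
  /-- the `S`-segments appear in cyclic order, `S_{k+1}` starting `t + r_k` after `S_k` -/
  hs : ∀ k : Fin M, s (cyc k) = s k + ((t + r k : ℕ) : Fin n)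
  hSdisj : ∀ k l : Fin M, k ≠ l → Disjoint (seg (s k) t) (seg (s l) t)
  /-- the `T`-segments -/
  T : Fin M → Finset (Fin n)
  hT : ∀ k, (∃ a : Fin n, T k = seg a t) ∨ T k = ∅
  hTdisj : ∀ k l : Fin M, k ≠ l → Disjoint (T k) (T l)
  hoverlap₁ : ∀ k, T k ≠ ∅ → t / 4 ≤ ((seg (s k) t) ∩ T k).card
  hoverlap₂ : ∀ k, T k ≠ ∅ → t / 4 ≤ ((seg (s (cyc k)) t) ∩ T k).card
  /-- only the last `T`-segment may be empty (the open-chain case), and in that case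
  `S_1` starts at the first qudit and `S_M` ends at the last qudit -/
  hTempty : ∀ k, T k = ∅ → (k : ℕ) = M - 1 ∧ (s ⟨0, hMpos⟩ : ℕ) = 0 ∧
    (s ⟨M - 1, Nat.sub_lt hMpos one_pos⟩ : ℕ) + t = n

namespace ChainSetup

variable {n : ℕ} [NeZero n]

/-- the coarse-grained Hamiltonian `H̄(t) = Σ_k (Q_{S_k} + Q_{T_k})` -/
noncomputable def coarseHam (C : ChainSetup n E) (t : ℕ) (G : CoarseGraining n t) :
    E →L[ℂ] E :=
  ∑ k, (C.Qproj (seg (G.s k) t) + C.Qproj (G.T k))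

/-- the coarse-grained detectability operator
`DL(t) = (∏_k (1 − Q_{S_k}))·(∏_k (1 − Q_{T_k}))` -/
noncomputable def coarseDL (C : ChainSetup n E) (t : ℕ) (G : CoarseGraining n t) :
    E →L[ℂ] E :=
  ((List.finRange G.M).map (fun k => 1 - C.Qproj (seg (G.s k) t))).prod *
    ((List.finRange G.M).map (fun k => 1 - C.Qproj (G.T k))).prod

/-- the detectability-lemma operator `DL(H) = ∏_{α=1}^L ∏_{(i,j) ∈ T_α} (1 − P_{ij})`,
taken layer by layer -/
noncomputable def DLHam (C : ChainSetup n E) : E →L[ℂ] E :=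
  ((List.finRange C.L).map (fun α =>
    (Finset.univ.filter (fun p : (i : Fin n) × Fin (C.m i) => C.layer p = α)).noncommProd
      (fun p => 1 - C.P p.1 p.2)
      (fun p hp q hq _ =>
        Commute.sub_left (Commute.one_left _)
          (Commute.sub_right (Commute.one_right _)
            (C.layers p q (by
              simp only [Finset.coe_filter, Set.mem_setOf_eq] at hp hq
              rw [hp.2, hq.2])))))).prod

end ChainSetup

/-!
Each power `(DL(H)† DL(H)) ^ q` is a product of layers of commuting factors `1 - P_{ij}`; equal
layers that become adjacent merge, so `2 * (L - 1) * q + 1` layers remain, at most `t / 4` when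
`q ≤ ⌈t / (8 L)⌉`. Every factor on a bond inside an `S`-segment is absorbed by `∏ (1 - Q_{S_k})`,
and this absorption follows a light cone: when the layers are peeled off one by one from the left,
a factor of the `j`-th layer at distance at least `j` from the gaps between the `S`-segments
commutes with everything retained so far. What is retained therefore lies within distance `t / 4`
of the gaps; there it is inside the `T`-segments and is absorbed by `∏ (1 - Q_{T_k})`. So every
power of `DL(H)† DL(H)` in `F(DL(H)† DL(H))` acts as `1`, and the coefficients sum to `F(1) = 1`.
-/

section LightCone

open Submonoid
open scoped Pointwise

variable {R ι : Type*} [Monoid R]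

lemma commute_of_mem_closure {s t : Set R} (h : ∀ x ∈ s, ∀ y ∈ t, Commute x y) {x y : R}
    (hx : x ∈ closure s) (hy : y ∈ closure t) : Commute x y := by
  have hs : closure s ≤ centralizer t := closure_le.2 fun x hx y hy ↦ (h x hx y hy).eq.symm
  have ht : closure t ≤ centralizer (closure s : Set R) :=
    closure_le.2 fun y hy x hx ↦ (hs hx y hy).symm
  exact ht hy x hx

lemma mul_eq_left_of_mem_closure {s : Set R} {a x : R} (h : ∀ y ∈ s, a * y = a)
    (hx : x ∈ closure s) : a * x = a := by
  induction hx using closure_induction with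
  | mem y hy => exact h y hy
  | one => exact mul_one a
  | mul y z _ _ hy hz => rw [← mul_assoc, hy, hz]

lemma mul_eq_right_of_mem_closure {s : Set R} {b x : R} (h : ∀ y ∈ s, y * b = b)
    (hx : x ∈ closure s) : x * b = b := by
  induction hx using closure_induction with
  | mem y hy => exact h y hy
  | one => exact one_mul b
  | mul y z _ _ hy hz => rw [mul_assoc, hz, hy]

/-- An element `x` that factors, for every set `V` of indices, as a product of generators `f p`
with `p ∉ V` followed by a product of generators with `p ∈ V`. Products of commuting
generators, such as the layers of a detectability-lemma operator, have this property. -/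
def IsSplittable (f : ι → R) (x : R) : Prop :=
  ∀ V : Set ι, ∃ y ∈ closure (f '' Vᶜ), ∃ z ∈ closure (f '' V), y * z = x

lemma isSplittable_noncommProd (f : ι → R) (s : Finset ι)
    (hs : (s : Set ι).Pairwise (Function.onFun Commute f)) :
    IsSplittable f (s.noncommProd f hs) := by
  classical
  intro V
  have hunion : s.filter (· ∈ Vᶜ) ∪ s.filter (· ∈ V) = s := by
    ext p
    simp only [Finset.mem_union, Finset.mem_filter, Set.mem_compl_iff]
    tauto
  have hdisj : Disjoint (s.filter (· ∈ Vᶜ)) (s.filter (· ∈ V)) :=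
    Finset.disjoint_filter.2 fun _ _ hp ↦ hp
  refine ⟨_, ?_, _, ?_, (Finset.noncommProd_union_of_disjoint hdisj f (by rwa [hunion])).symm.trans
    (Finset.noncommProd_congr hunion (fun _ _ ↦ rfl) _)⟩
  all_goals
    exact noncommProd_mem _ _ _ _ fun p hp ↦
      subset_closure (Set.mem_image_of_mem f (Finset.mem_filter.1 hp).2)

variable {f : ι → R} {U : ℕ → Set ι} {S : Set R} {a b : R}

/-- The light cone: the part of the next layer outside `U (k + 1)` commutes past
everything kept so far and is absorbed by `a`. -/
lemma exists_mem_closure_mul_eq_of_mem_pow (hU : Monotone U)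
    (hcomm : ∀ k, ∀ p ∈ U k, ∀ q ∉ U (k + 1), Commute (f p) (f q))
    (ha : ∀ p ∉ U 1, a * f p = a) (hS : ∀ w ∈ S, IsSplittable f w) {k : ℕ} {x : R}
    (hx : x ∈ S ^ k) : ∃ y ∈ closure (f '' U k), a * x = a * y := by
  induction k generalizing x with
  | zero =>
    rw [pow_zero, Set.mem_one] at hx
    exact ⟨1, one_mem _, by rw [hx]⟩
  | succ k ih =>
    rw [pow_succ] at hx
    obtain ⟨x', hx', w, hw, rfl⟩ := Set.mem_mul.1 hx
    obtain ⟨y, hy, hxy⟩ := ih hx'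
    obtain ⟨u, hu, z, hz, rfl⟩ := hS w hw (U (k + 1))
    have hau : a * u = a := by
      refine mul_eq_left_of_mem_closure (Set.forall_mem_image.2 fun p hp ↦ ha p ?_) hu
      exact fun hp' ↦ hp (hU (Nat.le_add_left 1 k) hp')
    have hyu : Commute y u := by
      refine commute_of_mem_closure (Set.forall_mem_image.2 fun p hp ↦ ?_) hy hu
      exact Set.forall_mem_image.2 fun q hq ↦ hcomm k p hp q hq
    refine ⟨y * z, mul_mem (closure_mono (Set.image_mono (hU k.le_succ)) hy) hz, ?_⟩
    calc a * (x' * (u * z)) = a * y * u * z := by rw [← mul_assoc, hxy, ← mul_assoc]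
      _ = a * u * y * z := by rw [mul_assoc a, hyu.eq, ← mul_assoc a]
      _ = a * (y * z) := by rw [hau, mul_assoc]

lemma mul_mul_eq_of_mem_pow (hU : Monotone U)
    (hcomm : ∀ k, ∀ p ∈ U k, ∀ q ∉ U (k + 1), Commute (f p) (f q))
    (ha : ∀ p ∉ U 1, a * f p = a) (hS : ∀ w ∈ S, IsSplittable f w) {k : ℕ}
    (hb : ∀ p ∈ U k, f p * b = b) {x : R} (hx : x ∈ S ^ k) : a * x * b = a * b := by
  obtain ⟨y, hy, hxy⟩ := exists_mem_closure_mul_eq_of_mem_pow hU hcomm ha hS hx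
  rw [hxy, mul_assoc, mul_eq_right_of_mem_closure (Set.forall_mem_image.2 hb) hy]

end LightCone

section Layers

open scoped Pointwise

variable {R : Type*} [Monoid R] {S : Set R}

lemma list_prod_mem_pow_length {l : List R} (hl : ∀ x ∈ l, x ∈ S) : l.prod ∈ S ^ l.length := by
  induction l with
  | nil => simp
  | cons x l ih =>
    rw [List.forall_mem_cons] at hl
    rw [List.prod_cons, List.length_cons, pow_succ']
    exact Set.mul_mem_mul hl.1 (ih hl.2)

variable [StarMul R]

lemma star_mem_pow (hS : ∀ x ∈ S, IsStarProjection x) {k : ℕ} {x : R} (hx : x ∈ S ^ k) :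
    star x ∈ S ^ k := by
  induction k generalizing x with
  | zero => simp_all
  | succ k ih =>
    obtain ⟨y, hy, w, hw, rfl⟩ := Set.mem_mul.1 (pow_succ S k ▸ hx)
    rw [star_mul, (hS w hw).isSelfAdjoint.star_eq, pow_succ']
    exact Set.mul_mem_mul hw (ih hy)

lemma exists_star_mul_self_eq_mul (hS : ∀ x ∈ S, IsStarProjection x) {k : ℕ} {D : R}
    (hD : D ∈ S ^ (k + 1)) :
    ∃ w ∈ S, ∃ y ∈ S ^ (2 * k), star D * D = w * y ∧ star D * D * w = star D * D := by
  rcases k with _ | k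
  · rw [zero_add, pow_one] at hD
    have hDD : star D * D = D := by
      rw [(hS D hD).isSelfAdjoint.star_eq, (hS D hD).isIdempotentElem.eq]
    refine ⟨D, hD, 1, by simp, ?_, ?_⟩
    · rw [hDD, mul_one]
    · rw [hDD, (hS D hD).isIdempotentElem.eq]
  · obtain ⟨y, hy, c, hc, rfl⟩ := Set.mem_mul.1 (pow_succ S (k + 1) ▸ hD)
    obtain ⟨b, hb, x, hx, rfl⟩ := Set.mem_mul.1 (pow_succ' S k ▸ hy)
    have hfactor : star (b * x * c) * (b * x * c) = c * (star x * b * (x * c)) := by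
      simp only [star_mul, (hS b hb).isSelfAdjoint.star_eq, (hS c hc).isSelfAdjoint.star_eq,
        mul_assoc, (hS b hb).isIdempotentElem.mul_self_mul]
    refine ⟨c, hc, star x * b * (x * c), ?_, hfactor, ?_⟩
    · have hleft := Set.mul_mem_mul (star_mem_pow hS hx) hb
      have hright := Set.mul_mem_mul hx hc
      rw [← pow_succ] at hleft hright
      rw [two_mul, pow_add]
      exact Set.mul_mem_mul hleft hright
    · simp only [mul_assoc, (hS c hc).isIdempotentElem.eq]

/-- Equal layers that become adjacent in `(star D * D) ^ q` merge, leaving `2 * k` layers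
per factor instead of `2 * (k + 1)`. -/
lemma star_mul_self_pow_mem_pow (hS : ∀ x ∈ S, IsStarProjection x) {k : ℕ} {D : R}
    (hD : D ∈ S ^ (k + 1)) {q : ℕ} (hq : 1 ≤ q) :
    (star D * D) ^ q ∈ S ^ (2 * k * q + 1) := by
  obtain ⟨w, hw, y, hy, hwy, habsorb⟩ := exists_star_mul_self_eq_mul hS hD
  have hpow : (star D * D) ^ q = w * y ^ q := by
    induction q, hq using Nat.le_induction with
    | base => rw [pow_one, pow_one, hwy]
    | succ q hq ih =>
      have hw_pow : (star D * D) ^ q * w = (star D * D) ^ q := by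
        rw [← Nat.sub_add_cancel hq, pow_succ, mul_assoc, habsorb]
      calc (star D * D) ^ (q + 1) = (star D * D) ^ q * w * y := by
            rw [pow_succ, mul_assoc, hwy]
        _ = w * y ^ (q + 1) := by rw [hw_pow, ih, mul_assoc, pow_succ]
  rw [hpow, pow_succ', pow_mul]
  exact Set.mul_mem_mul hw (Set.pow_mem_pow hy)

lemma isStarProjection_noncommProd {ι : Type*} {f : ι → R}
    (hf : ∀ i, IsStarProjection (f i)) (s : Finset ι)
    (hs : (s : Set ι).Pairwise (Function.onFun Commute f)) :
    IsStarProjection (s.noncommProd f hs) := by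
  classical
  induction s using Finset.induction_on with
  | empty => exact .one R
  | insert i s hi ih =>
    have hcomm : Commute (f i) (s.noncommProd f (hs.mono fun _ ↦ Finset.mem_insert_of_mem)) :=
      Finset.noncommProd_commute _ _ _ _ fun j hj ↦ hs (Finset.mem_insert_self i s)
        (Finset.mem_insert_of_mem hj) (ne_of_mem_of_not_mem hj hi).symm
    rw [Finset.noncommProd_insert_of_notMem _ _ _ _ hi]
    exact ⟨(hf i).isIdempotentElem.mul_of_commute hcomm (ih _).isIdempotentElem,
      ((hf i).isSelfAdjoint.commute_iff (ih _).isSelfAdjoint).1 hcomm⟩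

end Layers

section ListProd

variable {R κ : Type*} [Monoid R] {g : κ → R} {l : List κ} {k : κ} {x : R}

lemma exists_list_map_prod_eq_mul_mul (hl : l.Nodup) (hk : k ∈ l)
    (h : ∀ j, k ≠ j → Commute (g j) x) :
    ∃ y z, (l.map g).prod = y * g k * z ∧ Commute y x ∧ Commute z x := by
  obtain ⟨l₁, l₂, rfl⟩ := List.append_of_mem hk
  have hne : ∀ j ∈ l₁ ++ l₂, k ≠ j := fun j hj hkj ↦
    (List.nodup_cons.1 (List.nodup_middle.1 hl)).1 (hkj ▸ hj)
  refine ⟨(l₁.map g).prod, (l₂.map g).prod, by simp [mul_assoc], ?_, ?_⟩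
  all_goals
    refine Commute.list_prod_left _ _ fun y hy ↦ ?_
    obtain ⟨j, hj, rfl⟩ := List.mem_map.1 hy
    exact h j (hne j (by simp [hj]))

lemma list_map_prod_mul_eq_left (hl : l.Nodup) (hk : k ∈ l)
    (h : ∀ j, k ≠ j → Commute (g j) x) (hx : g k * x = g k) :
    (l.map g).prod * x = (l.map g).prod := by
  obtain ⟨y, z, hprod, -, hz⟩ := exists_list_map_prod_eq_mul_mul hl hk h
  rw [hprod, mul_assoc, hz.eq, ← mul_assoc, mul_assoc y, hx]

lemma mul_list_map_prod_eq_right (hl : l.Nodup) (hk : k ∈ l)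
    (h : ∀ j, k ≠ j → Commute (g j) x) (hx : x * g k = g k) :
    x * (l.map g).prod = (l.map g).prod := by
  obtain ⟨y, z, hprod, hy, -⟩ := exists_list_map_prod_eq_mul_mul hl hk h
  rw [hprod, ← mul_assoc, ← mul_assoc, ← hy.eq, mul_assoc y, hx]

end ListProd

lemma mul_aeval_mul_eq_eval_smul {K A : Type*} [CommSemiring K] [Semiring A] [Algebra K A]
    {a b c x : A} (F : Polynomial K) (h : ∀ q ≤ F.natDegree, a * x ^ q * b = c) :
    a * Polynomial.aeval x F * b = F.eval 1 • c := by
  rw [Polynomial.aeval_eq_sum_range, Polynomial.eval_eq_sum_range, Finset.mul_sum, Finset.sum_mul,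
    Finset.sum_smul]
  refine Finset.sum_congr rfl fun q hq ↦ ?_
  rw [mul_smul_comm, smul_mul_assoc, h q (Finset.mem_range_succ_iff.1 hq), one_pow, mul_one]

lemma two_mul_pred_mul_add_one_le_div_four {L q t : ℕ} (ht : 8 * L ^ 2 < t) (hq : 1 ≤ q)
    (hqt : q ≤ ⌈(t : ℝ) / (8 * (L : ℝ))⌉₊) : 2 * (L - 1) * q + 1 ≤ t / 4 := by
  rcases L with _ | l
  · simp_all
  have hq_lt : (q : ℝ) < t / (8 * (l + 1 : ℕ)) + 1 :=
    (Nat.cast_le.2 hqt).trans_lt (Nat.ceil_lt_add_one (by positivity))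
  have hq_mul : 8 * (l + 1) * q < t + 8 * (l + 1) := by
    rw [← sub_lt_iff_lt_add, lt_div_iff₀ (by positivity)] at hq_lt
    rify
    push_cast at hq_lt
    linarith
  rw [Nat.le_div_iff_mul_le four_pos, Nat.add_sub_cancel]
  rcases lt_or_ge (l + 1) q with hlq | hql
  · nlinarith
  · have : l * q ≤ l * (l + 1) := Nat.mul_le_mul_left l hql
    nlinarith

section Segments

variable {n : ℕ} [NeZero n] {a i j s : Fin n} {m r t v : ℕ}

lemma bondIn.mono {F F' : Finset (Fin n)} (h : bondIn i F) (hF : F ⊆ F') : bondIn i F' :=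
  ⟨hF h.1, hF h.2⟩

/-- The number of steps from the qudit `a` to the qudit `i` in the cyclic direction of
increasing indices. -/
def offset (a i : Fin n) : ℕ := (i - a : Fin n)

omit [NeZero n] in
lemma offset_lt (a i : Fin n) : offset a i < n := (i - a).isLt

lemma offset_injective (a : Fin n) : Function.Injective (offset a) :=
  Fin.val_injective.comp sub_left_injective

lemma offset_add_natCast (a : Fin n) (hm : m < n) : offset a (a + (m : Fin n)) = m := by
  rw [offset, add_sub_cancel_left, Fin.val_natCast, Nat.mod_eq_of_lt hm]

lemma offset_add_natCast_sub_natCast (a : Fin n) (hvm : v ≤ m) (hm : m < n) :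
    offset a (a + (m : Fin n) - (v : Fin n)) = m - v := by
  have hcast : a + (m : Fin n) - (v : Fin n) = a + ((m - v : ℕ) : Fin n) := by
    rw [sub_eq_iff_eq_add, add_assoc, ← Nat.cast_add, Nat.sub_add_cancel hvm]
  rw [hcast, offset_add_natCast a (by omega)]

lemma offset_add_offset (s a i : Fin n) :
    offset s a + offset a i = offset s i ∨ offset s a + offset a i = offset s i + n := by
  have hsum : offset s i = ((a - s + (i - a) : Fin n) : ℕ) := by
    rw [offset, add_comm, sub_add_sub_cancel]
  rw [Fin.val_add_eq_ite] at hsum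
  unfold offset at *
  split_ifs at hsum <;> omega

lemma mem_seg_iff (ht : t ≤ n) : i ∈ seg a t ↔ offset a i < t := by
  simp only [seg, Finset.mem_image, Finset.mem_range]
  constructor
  · rintro ⟨m, hm, rfl⟩
    rwa [offset_add_natCast a (hm.trans_le ht)]
  · exact fun h ↦ ⟨_, h, by rw [offset, Fin.cast_val_eq_self, add_sub_cancel]⟩

lemma bondIn_seg_of_offset_lt (ht : t ≤ n) (h : offset a i + 1 < t) : bondIn i (seg a t) := by
  have hstep : offset i (i + 1) = 1 := by
    simpa only [Nat.cast_one] using offset_add_natCast i (m := 1) (by omega)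
  have hsum := offset_add_offset a i (i + 1)
  exact ⟨(mem_seg_iff ht).2 (by omega), (mem_seg_iff ht).2 (by omega)⟩

lemma mem_seg_thickening (hi : i ∈ seg a m) :
    i - 1 ∈ seg (a - 1) (m + 2) ∧ i ∈ seg (a - 1) (m + 2) ∧ i + 1 ∈ seg (a - 1) (m + 2) := by
  simp only [seg, Finset.mem_image, Finset.mem_range] at hi ⊢
  obtain ⟨x, hx, rfl⟩ := hi
  refine ⟨⟨x, by omega, ?_⟩, ⟨x + 1, by omega, ?_⟩, ⟨x + 1 + 1, by omega, ?_⟩⟩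
  all_goals
    push_cast
    abel

lemma bondIn_seg_thickening (hi : bondIn i (seg a m))
    (hij : ¬ Disjoint ({i, i + 1} : Finset (Fin n)) {j, j + 1}) :
    bondIn j (seg (a - 1) (m + 2)) := by
  have hfst := mem_seg_thickening hi.1
  have hsnd := mem_seg_thickening hi.2
  obtain rfl | rfl | rfl : i = j ∨ i + 1 = j ∨ i = j + 1 := by
    simp only [Finset.disjoint_insert_left, Finset.disjoint_singleton_left, Finset.mem_insert,
      Finset.mem_singleton, add_left_inj] at hij
    tauto
  · exact ⟨hfst.2.1, hsnd.2.1⟩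
  · exact ⟨hsnd.2.1, hsnd.2.2⟩
  · exact ⟨by simpa only [add_sub_cancel_right] using hfst.1, hfst.2.1⟩

lemma card_le_of_offset_mem_Ico {A : Finset (Fin n)} {p b : ℕ}
    (hA : ∀ i ∈ A, offset s i ∈ Set.Ico p b) : A.card ≤ b - p := by
  simpa only [Nat.card_Ico] using Finset.card_le_card_of_injOn (t := Finset.Ico p b) (offset s)
    (fun i hi ↦ Finset.coe_Ico p b ▸ hA i hi) (offset_injective s).injOn

variable {A : Finset (Fin n)}

lemma exists_offset_add_le (ht : t ≤ n) (hA : A ⊆ seg s t) (hv : 0 < v) (hcard : v ≤ A.card) :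
    ∃ i ∈ A, offset s i + v ≤ t := by
  by_contra! hlt
  have := card_le_of_offset_mem_Ico (s := s) (p := t + 1 - v) (b := t) (A := A) fun i hi ↦
    ⟨by have := hlt i hi; omega, (mem_seg_iff ht).1 (hA hi)⟩
  omega

lemma exists_le_offset_add_one (hv : 0 < v) (hcard : v ≤ A.card) :
    ∃ i ∈ A, v ≤ offset s i + 1 := by
  by_contra! hlt
  have := card_le_of_offset_mem_Ico (s := s) (p := 0) (b := v - 1) (A := A) fun i hi ↦
    ⟨Nat.zero_le _, by have := hlt i hi; omega⟩
  omega

/-- The overlaps contain qudits at depth `v` on the two sides of the gap, and `3 * t + r ≤ n` forces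
`seg a t` to join these across the gap rather than around the chain. -/
lemma seg_subset_of_overlap (htn : 3 * t + r ≤ n) (hv : 0 < v)
    (hleft : v ≤ (seg s t ∩ seg a t).card)
    (hright : v ≤ (seg (s + ((t + r : ℕ) : Fin n)) t ∩ seg a t).card) :
    seg (s + (t : Fin n) - (v : Fin n)) (r + 2 * v) ⊆ seg a t := by
  have ht : t ≤ n := by omega
  set s' := s + ((t + r : ℕ) : Fin n)
  set b := s + (t : Fin n) - (v : Fin n)
  obtain ⟨x, hx, hxv⟩ := exists_offset_add_le ht Finset.inter_subset_left hv hleft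
  obtain ⟨y, hy, hyv⟩ := exists_le_offset_add_one (s := s') hv hright
  rw [Finset.mem_inter, mem_seg_iff ht, mem_seg_iff ht] at hx hy
  have hs' : offset s s' = t + r := offset_add_natCast s (by omega)
  have hb : offset s b = t - v := offset_add_natCast_sub_natCast s (by omega) (by omega)
  have hx_sum := offset_add_offset s a x
  have hy_sum := offset_add_offset s a y
  have hy_sum' := offset_add_offset s s' y
  have ha_lt := offset_lt s a
  have ha : offset s a ≤ t - v ∧ t + r + v ≤ offset s a + t := by omega
  intro i hi
  rw [mem_seg_iff (by omega)] at hi ⊢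
  have hi_lt := offset_lt a i
  have hi_sum := offset_add_offset s a i
  have hi_sum' := offset_add_offset s b i
  omega

end Segments

namespace CoarseGraining

variable {n : ℕ} [NeZero n] {t : ℕ} (G : CoarseGraining n t)

/-- The qudits between the `k`-th and the next `S`-segment, together with the `j` nearest qudits
on each side of this gap. -/
def gapNhd (k : Fin G.M) (j : ℕ) : Finset (Fin n) :=
  seg (G.s k + (t : Fin n) - (j : Fin n)) (G.r k + 2 * j)

/-- The bonds inside the `j`-neighbourhoods of the gaps that are covered by a `T`-segment. For the
open chain this leaves out the cut between the last and the first `S`-segment. -/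
def gapBonds (j : ℕ) : Set (Fin n) := {i | ∃ k, G.T k ≠ ∅ ∧ bondIn i (G.gapNhd k j)}

lemma gapNhd_succ (k : Fin G.M) (j : ℕ) :
    G.gapNhd k (j + 1) = seg (G.s k + (t : Fin n) - (j : Fin n) - 1) (G.r k + 2 * j + 2) := by
  rw [gapNhd, Nat.cast_add, Nat.cast_one, sub_add_eq_sub_sub, mul_add, ← add_assoc]

lemma mem_gapBonds_succ_of_not_disjoint {i i' : Fin n} {j : ℕ} (hi : i ∈ G.gapBonds j)
    (h : ¬ Disjoint ({i, i + 1} : Finset (Fin n)) {i', i' + 1}) : i' ∈ G.gapBonds (j + 1) := by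
  obtain ⟨k, hk, hik⟩ := hi
  exact ⟨k, hk, G.gapNhd_succ k j ▸ bondIn_seg_thickening hik h⟩

lemma gapBonds_mono : Monotone G.gapBonds :=
  monotone_nat_of_le_succ fun _ _ hi ↦ G.mem_gapBonds_succ_of_not_disjoint hi (by simp)

variable {G}

lemma exists_bondIn_T_of_mem_gapBonds (ht : 4 ≤ t) (htn : 4 * t ≤ n) {i : Fin n} {j : ℕ}
    (hj : j ≤ t / 4) (hi : i ∈ G.gapBonds j) : ∃ k, bondIn i (G.T k) := by
  obtain ⟨k, hk, hik⟩ := G.gapBonds_mono hj hi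
  obtain ⟨a, ha⟩ := (G.hT k).resolve_right hk
  have hr := G.hr k
  have hleft := G.hoverlap₁ k hk
  have hright := G.hoverlap₂ k hk
  rw [G.hs k] at hright
  rw [ha] at hleft hright
  exact ⟨k, ha ▸ hik.mono (seg_subset_of_overlap (by omega) (by omega) hleft hright)⟩

lemma exists_offset_lt_add (ht : 0 < t) (htn : 2 * t ≤ n) (i : Fin n) :
    ∃ k, offset (G.s k) i < t + G.r k := by
  have : Nonempty (Fin G.M) := ⟨⟨0, G.hMpos⟩⟩
  obtain ⟨k, hk⟩ := Finite.exists_min fun k ↦ offset (G.s k) i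
  refine ⟨k, lt_of_not_ge fun hki ↦ ?_⟩
  have hr := G.hr k
  have hnext : offset (G.s k) (G.s (cyc k)) = t + G.r k := by
    rw [G.hs k, offset_add_natCast _ (by omega)]
  have hsum := offset_add_offset (G.s k) (G.s (cyc k)) i
  have hle := hk (cyc k)
  have hlt := offset_lt (G.s (cyc k)) i
  omega

lemma s_add_of_T_eq_empty (htn : 2 * t ≤ n) {k : Fin G.M} (hk : G.T k = ∅) :
    (G.s k : ℕ) + t = n ∧ G.r k = 0 := by
  obtain ⟨hlast, hfirst, hend⟩ := G.hTempty k hk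
  have hk_eq : k = ⟨G.M - 1, Nat.sub_lt G.hMpos one_pos⟩ := Fin.ext hlast
  have hcyc : cyc k = ⟨0, G.hMpos⟩ :=
    Fin.ext (by simp only [cyc, hlast, Nat.sub_add_cancel G.hMpos, Nat.mod_self])
  rw [← hk_eq] at hend
  refine ⟨hend, ?_⟩
  have hr := G.hr k
  have hs := congrArg Fin.val (G.hs k)
  rwa [hcyc, hfirst, Fin.val_add, Fin.val_natCast, Nat.mod_eq_of_lt (a := t + G.r k) (by omega),
    ← Nat.add_assoc, hend, Nat.add_mod_left, Nat.mod_eq_of_lt (by omega), eq_comm] at hs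

lemma bondIn_S_or_eq_last_of_notMem_gapBonds (ht : 0 < t) (htn : 2 * t ≤ n) {i : Fin n}
    (hi : i ∉ G.gapBonds 1) :
    (∃ k, bondIn i (seg (G.s k) t)) ∨ (∃ k, G.T k = ∅) ∧ (i : ℕ) = n - 1 := by
  obtain ⟨k, hk⟩ := exists_offset_lt_add (G := G) ht htn i
  rcases lt_or_ge (offset (G.s k) i + 1) t with hit | hti
  · exact .inl ⟨k, bondIn_seg_of_offset_lt (by omega) hit⟩
  have hr := G.hr k
  by_cases hT : G.T k = ∅
  · obtain ⟨hs, hr₀⟩ := s_add_of_T_eq_empty htn hT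
    refine .inr ⟨⟨k, hT⟩, ?_⟩
    have hi_eq : (i : ℕ) = (G.s k + (i - G.s k) : Fin n) := by rw [add_sub_cancel]
    rw [Fin.val_add, Nat.mod_eq_of_lt (by unfold offset at *; omega)] at hi_eq
    unfold offset at *
    omega
  · refine absurd ⟨k, hT, bondIn_seg_of_offset_lt (by omega) ?_⟩ hi
    have hb := offset_add_natCast_sub_natCast (G.s k) (v := 1) (m := t) (by omega) (by omega)
    have hsum := offset_add_offset (G.s k) (G.s k + (t : Fin n) - ((1 : ℕ) : Fin n)) i
    have hlt := offset_lt (G.s k + (t : Fin n) - ((1 : ℕ) : Fin n)) i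
    omega

end CoarseGraining

section StarProjection

variable {𝕜 V ι : Type*} [RCLike 𝕜] [NormedAddCommGroup V] [InnerProductSpace 𝕜 V]
  [CompleteSpace V]

lemma inner_apply_self_of_isStarProjection {p : V →L[𝕜] V} (hp : IsStarProjection p) (v : V) :
    inner 𝕜 (p v) v = (‖p v‖ : 𝕜) ^ 2 := by
  rw [← inner_self_eq_norm_sq_to_K, ← ContinuousLinearMap.adjoint_inner_left,
    ← ContinuousLinearMap.star_eq_adjoint, hp.isSelfAdjoint.star_eq,
    ← mul_apply_eq_comp, hp.isIdempotentElem.eq]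

lemma apply_eq_zero_of_sum_apply_eq_zero {s : Finset ι} {p : ι → V →L[𝕜] V}
    (hp : ∀ i ∈ s, IsStarProjection (p i)) {v : V} (hv : (∑ i ∈ s, p i) v = 0) {i : ι}
    (hi : i ∈ s) : p i v = 0 := by
  have hsum : ∑ i ∈ s, ‖p i v‖ ^ 2 = 0 := by
    have hinner : inner 𝕜 ((∑ i ∈ s, p i) v) v = ∑ i ∈ s, (‖p i v‖ : 𝕜) ^ 2 := by
      rw [sum_apply, sum_inner]
      exact Finset.sum_congr rfl fun i hi ↦ inner_apply_self_of_isStarProjection (hp i hi) v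
    rw [hv, inner_zero_left] at hinner
    exact_mod_cast hinner.symm
  simpa using (Finset.sum_eq_zero_iff_of_nonneg fun _ _ ↦ sq_nonneg _).1 hsum i hi

lemma commute_starProjection_ker {T A : V →L[𝕜] V} (hT : IsSelfAdjoint T) (h : Commute T A)
    [(LinearMap.ker (A : V →ₗ[𝕜] V)).HasOrthogonalProjection] :
    Commute (LinearMap.ker (A : V →ₗ[𝕜] V)).starProjection T := by
  set G := (LinearMap.ker (A : V →ₗ[𝕜] V)).starProjection
  have hGsa : star G = G := isStarProjection_starProjection.isSelfAdjoint.star_eq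
  have hconj : G * (T * G) = T * G := by
    ext v
    refine Submodule.starProjection_eq_self_iff.2 ?_
    have hv : A (G v) = 0 := LinearMap.mem_ker.1 (Submodule.starProjection_apply_mem _ v)
    have hTA : T (A (G v)) = A (T (G v)) := DFunLike.congr_fun h.eq (G v)
    rw [hv, map_zero] at hTA
    exact hTA.symm
  have hstar := congrArg star hconj
  simp only [star_mul, hT.star_eq, hGsa] at hstar
  rw [commute_iff_eq, ← hstar, mul_assoc, hconj]

end StarProjection

namespace ChainSetup

variable {n : ℕ} [NeZero n] {C : ChainSetup n E} {F F' : Finset (Fin n)}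
  {p q : (i : Fin n) × Fin (C.m i)}

lemma isStarProjection_P (C : ChainSetup n E) (i : Fin n) (j : Fin (C.m i)) :
    IsStarProjection (C.P i j) :=
  ⟨(C.proj i j).2, (C.proj i j).1⟩

/-- The projector `1 - P_{ij}` onto the local ground space of the interaction term `P_{ij}`. -/
noncomputable def localGround (C : ChainSetup n E) (p : (i : Fin n) × Fin (C.m i)) : E →L[ℂ] E :=
  1 - C.P p.1 p.2

lemma isStarProjection_localGround (C : ChainSetup n E) (p : (i : Fin n) × Fin (C.m i)) :
    IsStarProjection (C.localGround p) :=
  (C.isStarProjection_P p.1 p.2).one_sub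

lemma commute_localGround (h : Commute (C.P p.1 p.2) (C.P q.1 q.2)) :
    Commute (C.localGround p) (C.localGround q) :=
  (Commute.one_left _).sub_left ((Commute.one_right _).sub_right h)

lemma P_eq_zero_of_Hbond_eq_zero {i : Fin n} (h : C.Hbond i = 0) (j : Fin (C.m i)) :
    C.P i j = 0 := by
  ext v
  exact apply_eq_zero_of_sum_apply_eq_zero (fun j _ ↦ C.isStarProjection_P i j)
    (DFunLike.congr_fun h v) (Finset.mem_univ j)

lemma P_apply_eq_zero_of_hamOn_apply_eq_zero {v : E} (hv : C.hamOn F v = 0) (hp : bondIn p.1 F) :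
    C.P p.1 p.2 v = 0 := by
  simp only [hamOn, Hbond, Finset.sum_sigma'] at hv
  exact apply_eq_zero_of_sum_apply_eq_zero (p := fun p ↦ C.P p.1 p.2)
    (fun p _ ↦ C.isStarProjection_P p.1 p.2) hv (i := p) (by simpa using hp)

lemma one_sub_Qproj (C : ChainSetup n E) (F : Finset (Fin n)) :
    1 - C.Qproj F = (LinearMap.ker (C.hamOn F : E →ₗ[ℂ] E)).starProjection := by
  have hQ : C.Qproj F = (LinearMap.ker (C.hamOn F : E →ₗ[ℂ] E))ᗮ.starProjection := rfl
  rw [hQ, Submodule.starProjection_orthogonal']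
  exact sub_sub_cancel _ _

lemma localGround_mul_one_sub_Qproj (hp : bondIn p.1 F) :
    C.localGround p * (1 - C.Qproj F) = 1 - C.Qproj F := by
  ext v
  have hv : C.hamOn F ((1 - C.Qproj F) v) = 0 :=
    C.one_sub_Qproj F ▸ LinearMap.mem_ker.1 (Submodule.starProjection_apply_mem _ v)
  rw [localGround, sub_mul, one_mul, sub_apply, mul_apply_eq_comp,
    P_apply_eq_zero_of_hamOn_apply_eq_zero hv hp, sub_zero]

lemma one_sub_Qproj_mul_localGround (hp : bondIn p.1 F) :
    (1 - C.Qproj F) * C.localGround p = 1 - C.Qproj F := by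
  have hQ : star (1 - C.Qproj F) = 1 - C.Qproj F :=
    C.one_sub_Qproj F ▸ isStarProjection_starProjection.isSelfAdjoint.star_eq
  simpa only [star_mul, hQ, (C.isStarProjection_localGround p).isSelfAdjoint.star_eq] using
    congrArg star (localGround_mul_one_sub_Qproj hp)

lemma commute_one_sub_Qproj_localGround (hF : Disjoint F F') (hp : bondIn p.1 F) :
    Commute (1 - C.Qproj F') (C.localGround p) := by
  rw [one_sub_Qproj]
  refine commute_starProjection_ker (C.isStarProjection_localGround p).isSelfAdjoint ?_
  refine Commute.sum_right _ _ _ fun i hi ↦ Commute.sum_right _ _ _ fun j _ ↦ ?_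
  refine (Commute.one_left _).sub_left (C.locality _ _ _ _ ?_)
  rw [Finset.mem_filter_univ] at hi
  refine hF.mono ?_ ?_
  all_goals rw [Finset.insert_subset_iff, Finset.singleton_subset_iff]
  exacts [hp, hi]

section Products

variable {M : ℕ} {S : Fin M → Finset (Fin n)}

lemma prod_one_sub_Qproj_mul_localGround (hS : Pairwise (Function.onFun Disjoint S)) {k : Fin M}
    (hp : bondIn p.1 (S k)) :
    ((List.finRange M).map fun k ↦ 1 - C.Qproj (S k)).prod * C.localGround p =
      ((List.finRange M).map fun k ↦ 1 - C.Qproj (S k)).prod :=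
  list_map_prod_mul_eq_left (List.nodup_finRange M) (List.mem_finRange k)
    (fun _ hkj ↦ commute_one_sub_Qproj_localGround (hS hkj) hp) (one_sub_Qproj_mul_localGround hp)

lemma localGround_mul_prod_one_sub_Qproj (hS : Pairwise (Function.onFun Disjoint S)) {k : Fin M}
    (hp : bondIn p.1 (S k)) :
    C.localGround p * ((List.finRange M).map fun k ↦ 1 - C.Qproj (S k)).prod =
      ((List.finRange M).map fun k ↦ 1 - C.Qproj (S k)).prod :=
  mul_list_map_prod_eq_right (List.nodup_finRange M) (List.mem_finRange k)
    (fun _ hkj ↦ commute_one_sub_Qproj_localGround (hS hkj) hp) (localGround_mul_one_sub_Qproj hp)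

end Products

lemma pairwise_commute_localGround_layer (C : ChainSetup n E) (α : Fin C.L) :
    ((Finset.univ.filter fun p ↦ C.layer p = α : Finset _) : Set _).Pairwise
      (Function.onFun Commute C.localGround) := by
  intro p hp q hq _
  rw [Finset.mem_coe, Finset.mem_filter_univ] at hp hq
  exact commute_localGround (C.layers p q (hp.trans hq.symm))

/-- The factor `∏_{(i,j) ∈ T_α} (1 - P_{ij})` of `DL(H)`. -/
noncomputable def layerProd (C : ChainSetup n E) (α : Fin C.L) : E →L[ℂ] E :=
  (Finset.univ.filter fun p ↦ C.layer p = α).noncommProd C.localGround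
    (C.pairwise_commute_localGround_layer α)

open scoped Pointwise in
lemma DLHam_mem_pow (C : ChainSetup n E) : C.DLHam ∈ Set.range C.layerProd ^ C.L := by
  have hDL : C.DLHam = ((List.finRange C.L).map C.layerProd).prod := rfl
  have hmem : ∀ x ∈ (List.finRange C.L).map C.layerProd, x ∈ Set.range C.layerProd := by
    simp
  simpa only [hDL, List.length_map, List.length_finRange] using list_prod_mem_pow_length hmem

variable {t : ℕ} {G : CoarseGraining n t}

lemma commute_localGround_of_mem_gapBonds {j : ℕ} (hp : p.1 ∈ G.gapBonds j)
    (hq : q.1 ∉ G.gapBonds (j + 1)) : Commute (C.localGround p) (C.localGround q) :=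
  commute_localGround <| C.locality _ _ _ _ <| not_not.1 fun h ↦
    hq (G.mem_gapBonds_succ_of_not_disjoint hp h)

lemma prod_mul_adjoint_DLHam_mul_DLHam_pow_mul_prod (C : ChainSetup n E) (htn : 4 * t ≤ n)
    (hopen : (∃ k, G.T k = ∅) → C.Hbond ⟨n - 1, Nat.sub_one_lt (NeZero.ne n)⟩ = 0)
    (hL : 0 < C.L) {q : ℕ} (hq : 1 ≤ q) (hqt : 2 * (C.L - 1) * q + 1 ≤ t / 4) :
    ((List.finRange G.M).map (fun k => 1 - C.Qproj (seg (G.s k) t))).prod *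
        (ContinuousLinearMap.adjoint C.DLHam * C.DLHam) ^ q *
        ((List.finRange G.M).map (fun k => 1 - C.Qproj (G.T k))).prod = C.coarseDL t G := by
  have hlayer : ∀ w ∈ Set.range C.layerProd, IsStarProjection w := Set.forall_mem_range.2 fun α ↦
    isStarProjection_noncommProd C.isStarProjection_localGround _ _
  have hsplit : ∀ w ∈ Set.range C.layerProd, IsSplittable C.localGround w :=
    Set.forall_mem_range.2 fun α ↦ isSplittable_noncommProd _ _ _
  have hpow := star_mul_self_pow_mem_pow hlayer
    (k := C.L - 1) (by rw [Nat.sub_add_cancel hL]; exact C.DLHam_mem_pow) hq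
  refine mul_mul_eq_of_mem_pow (U := fun j ↦ Sigma.fst ⁻¹' G.gapBonds j)
    (fun _ _ hjk ↦ Set.preimage_mono (G.gapBonds_mono hjk))
    (fun _ p hp q hq ↦ commute_localGround_of_mem_gapBonds (p := p) (q := q) hp hq)
    (fun p hp ↦ ?_) hsplit (fun p hp ↦ ?_) hpow
  · rcases CoarseGraining.bondIn_S_or_eq_last_of_notMem_gapBonds (by omega) (by omega) hp with
      ⟨k, hk⟩ | ⟨hT, hlast⟩
    · exact prod_one_sub_Qproj_mul_localGround (S := fun k ↦ seg (G.s k) t) G.hSdisj hk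
    · have hbond : C.Hbond p.1 = 0 := (Fin.ext hlast : p.1 = ⟨n - 1, _⟩) ▸ hopen hT
      rw [localGround, P_eq_zero_of_Hbond_eq_zero hbond, sub_zero, mul_one]
  · obtain ⟨k, hk⟩ := CoarseGraining.exists_bondIn_T_of_mem_gapBonds (by omega) htn hqt hp
    exact localGround_mul_prod_one_sub_Qproj G.hTdisj hk

end ChainSetup

/-- for a frustration-free chain Hamiltonian as in the setup with `L` layers
and coarse-graining parameter `8L² < t < n/5`, and for any polynomial `F` of degree at most
`⌈t/(8L)⌉` with `F(1) = 1`,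
`DL(t) = (∏_k (1 − Q_{S_k})) · F(DL(H)† DL(H)) · (∏_k (1 − Q_{T_k}))`. -/
theorem stmt_14 {n : ℕ} [NeZero n] (C : ChainSetup n E)
    (t : ℕ) (ht1 : 8 * C.L ^ 2 < t) (ht2 : 5 * t < n)
    (G : CoarseGraining n t)
    (hopen : (∃ k, G.T k = ∅) → C.Hbond ⟨n - 1, by omega⟩ = 0)
    (F : Polynomial ℂ) (hdeg : F.natDegree ≤ ⌈(t : ℝ) / (8 * (C.L : ℝ))⌉₊)
    (hF1 : F.eval 1 = 1) :
    C.coarseDL t G =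
      ((List.finRange G.M).map (fun k => 1 - C.Qproj (seg (G.s k) t))).prod *
        Polynomial.aeval (ContinuousLinearMap.adjoint C.DLHam * C.DLHam) F *
        ((List.finRange G.M).map (fun k => 1 - C.Qproj (G.T k))).prod := by
  have hpow : ∀ q ≤ F.natDegree,
      ((List.finRange G.M).map (fun k => 1 - C.Qproj (seg (G.s k) t))).prod *
        (ContinuousLinearMap.adjoint C.DLHam * C.DLHam) ^ q *
        ((List.finRange G.M).map (fun k => 1 - C.Qproj (G.T k))).prod = C.coarseDL t G := by
    intro q hqF
    rcases Nat.eq_zero_or_pos q with rfl | hq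
    · rw [pow_zero, mul_one, ChainSetup.coarseDL]
    have hqt := hqF.trans hdeg
    have hL : 0 < C.L := Nat.pos_of_ne_zero fun hL ↦ by simp [hL, hq.ne'] at hqt
    exact C.prod_mul_adjoint_DLHam_mul_DLHam_pow_mul_prod (by omega) hopen hL hq
      (two_mul_pred_mul_add_one_le_div_four ht1 hq hqt)
  rw [mul_aeval_mul_eq_eval_smul F hpow, hF1, one_smul]
end

section
/- (Knabe's theorem.) Let H = Σ_{i=1}^n P_{i,i+1} be a translationally invariant nearest-neighbour frustration-free Hamiltonian on a periodic chain of n spins, where each P_{i,i+1} is an orthogonal projector acting on spins i, i+1 (indices mod n), all equal to the same two-body projector. Let γ be the spectral gap of H, and for 3 ≤ t < n let γ(t) be the spectral gap of h_{k,t} = Σ_{i=k+1}^{k+t−1} P_{i,i+1} (independent of k by translation invariance). Then γ + 1/(t−2) ≥ ((t−1)/(t−2))·γ(t). -/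
open scoped Fin.NatCast

variable {E : Type*} [NormedAddCommGroup E] [InnerProductSpace ℂ E] [FiniteDimensional ℂ E]

/-!
Let `H = ∑ i, P i` and `Γ d = ∑ i, P i * P (i + d)`, so that `∑ d, Γ d = H * H`. Summed over all
translates of the window `S = {0, …, t - 2}`, the squares of the local Hamiltonians give
`∑ d, #(S ∩ (d +ᵥ S)) • Γ d`. The coefficient of `Γ d` is at most `#S - 1` unless `d = 0`, with
equality for `d = ±1`. For the other `d ≠ 0` the bonds are disjoint, so `Γ d ≥ 0` is a sum of
products of commuting positive elements. Hence the total is at most `(#S - 1) • (H * H) + Γ 0`: the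
possibly indefinite terms `Γ (±1)` occur with the same coefficient on both sides. A gap `g` of the
local Hamiltonians bounds the total below by `g • #S • H`, and comparing the two bounds keeps the
positive spectrum of `H` away from zero.
-/

open Finset
open scoped Pointwise

section Counting

variable {G : Type*} [AddGroup G] [DecidableEq G]

theorem sum_sum_sub_eq_sum_card_inter_vadd [Fintype G] {M : Type*} [AddCommMonoid M]
    (S : Finset G) (F : G → M) :
    ∑ a ∈ S, ∑ b ∈ S, F (b - a) = ∑ d, #(S ∩ (d +ᵥ S)) • F d := by
  rw [sum_comm, ← sum_product', ← sum_fiberwise (S ×ˢ S) (fun p ↦ p.1 - p.2)]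
  refine sum_congr rfl fun d _ ↦ ?_
  rw [card_inter_vadd, ← card_sub_eq, ← sum_const]
  exact sum_congr rfl fun p hp ↦ congrArg F (mem_filter.mp hp).2

theorem card_inter_neg_vadd (S : Finset G) (d : G) :
    #(S ∩ (-d +ᵥ S)) = #(S ∩ (d +ᵥ S)) := by
  rw [← card_vadd_finset d, vadd_finset_inter, vadd_neg_vadd, inter_comm]

theorem card_inter_vadd_of_card_sdiff_vadd_eq_one {S : Finset G} {u : G}
    (hS : #(S \ (u +ᵥ S)) = 1) :
    #(S ∩ (u +ᵥ S)) = #S - 1 := by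
  have := card_inter_add_card_sdiff S (u +ᵥ S)
  omega

end Counting

section CommCounting

variable {G : Type*} [AddCommGroup G] [DecidableEq G] {S : Finset G} {d u : G}

theorem card_inter_vadd_le_of_card_sdiff_vadd_eq_one (hS : #(S \ (u +ᵥ S)) = 1) (hd : d ≠ 0) :
    #(S ∩ (d +ᵥ S)) ≤ #S - 1 := by
  refine Nat.le_sub_one_of_lt ((card_le_card inter_subset_left).lt_of_ne fun hcard ↦ hd ?_)
  have hsub : S ⊆ d +ᵥ S := inter_eq_left.mp (eq_of_subset_of_card_le inter_subset_left hcard.ge)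
  have hdS : d +ᵥ S = S := (eq_of_subset_of_card_le hsub (card_vadd_finset d S).le).symm
  -- A translation preserving `S` preserves the singleton `S \ (u +ᵥ S)`.
  obtain ⟨x, hx⟩ := card_eq_one.mp hS
  have hfix : d +ᵥ ({x} : Finset G) = {x} := by
    rw [← hx, vadd_finset_sdiff, vadd_comm, hdS]
  simpa using hfix

theorem sum_sum_sub_le_of_card_sdiff_vadd_eq_one [Fintype G] {M : Type*} [AddCommMonoid M]
    [PartialOrder M] [IsOrderedAddMonoid M] (hS : #(S \ (u +ᵥ S)) = 1) {F : G → M}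
    (hF : ∀ d, d ≠ 0 → d ≠ u → d ≠ -u → 0 ≤ F d) :
    ∑ a ∈ S, ∑ b ∈ S, F (b - a) ≤ (#S - 1) • ∑ d, F d + F 0 := by
  have hu : #(S ∩ (u +ᵥ S)) = #S - 1 := card_inter_vadd_of_card_sdiff_vadd_eq_one hS
  have hF0 : F 0 = ∑ d, if d = 0 then F d else 0 := by simp
  rw [sum_sum_sub_eq_sum_card_inter_vadd, hF0, smul_sum, ← sum_add_distrib]
  refine sum_le_sum fun d _ ↦ ?_
  rcases eq_or_ne d 0 with rfl | hd0
  · have hpos : 0 < #S := by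
      have := card_le_card (sdiff_subset (s := S) (t := u +ᵥ S))
      omega
    rw [zero_vadd, inter_self, if_pos rfl, ← succ_nsmul, Nat.sub_add_cancel hpos]
  rw [if_neg hd0, add_zero]
  rcases eq_or_ne d u with rfl | hdu
  · rw [hu]
  rcases eq_or_ne d (-u) with rfl | hdnu
  · rw [card_inter_neg_vadd, hu]
  · exact nsmul_le_nsmul_left (hF d hd0 hdu hdnu)
      (card_inter_vadd_le_of_card_sdiff_vadd_eq_one hS hd0)

end CommCounting

section OperatorInequality

variable {G R : Type*} [Fintype G] [NonUnitalNonAssocSemiring R]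

/-- The autocorrelation `∑ i, P i * P (i + d)` of a family `P` indexed by a finite group: the
part of `(∑ i, P i) * (∑ i, P i)` coming from pairs of indices at displacement `d`. -/
def autocorrelation [Add G] (P : G → R) (d : G) : R := ∑ i, P i * P (i + d)

theorem sum_autocorrelation [AddGroup G] (P : G → R) :
    ∑ d, autocorrelation P d = (∑ i, P i) * ∑ i, P i := by
  simp_rw [autocorrelation]
  rw [sum_comm, sum_mul]
  simp_rw [← mul_sum]
  exact sum_congr rfl fun i _ ↦ congrArg (P i * ·) (Equiv.sum_comp (Equiv.addLeft i) P)

theorem sum_translate_mul_self [AddCommGroup G] (P : G → R) (S : Finset G) :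
    ∑ k, (∑ a ∈ S, P (k + a)) * ∑ a ∈ S, P (k + a)
      = ∑ a ∈ S, ∑ b ∈ S, autocorrelation P (b - a) := by
  simp_rw [sum_mul_sum]
  rw [sum_comm]
  refine sum_congr rfl fun a _ ↦ ?_
  rw [sum_comm]
  refine sum_congr rfl fun b _ ↦ ?_
  rw [autocorrelation, ← Equiv.sum_comp (Equiv.addRight a) fun i ↦ P i * P (i + (b - a))]
  simp only [Equiv.coe_addRight, add_assoc, add_sub_cancel]

theorem sum_sum_translate [AddGroup G] {M : Type*} [AddCommMonoid M] (P : G → M) (S : Finset G) :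
    ∑ k, ∑ a ∈ S, P (k + a) = #S • ∑ i, P i := by
  rw [sum_comm, ← sum_const]
  exact sum_congr rfl fun a _ ↦ Equiv.sum_comp (Equiv.addRight a) P

theorem knabe_operator_inequality [AddCommGroup G] [DecidableEq G] [PartialOrder R]
    [IsOrderedAddMonoid R] {𝕜 : Type*} [DistribSMul 𝕜 R] {P : G → R} {S : Finset G} {u : G}
    (hS : #(S \ (u +ᵥ S)) = 1) (hsq : ∀ i, P i * P i ≤ P i)
    (hmul : ∀ i d, d ≠ 0 → d ≠ u → d ≠ -u → 0 ≤ P i * P (i + d)) {g : 𝕜}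
    (hgap : ∀ k, g • ∑ a ∈ S, P (k + a) ≤ (∑ a ∈ S, P (k + a)) * ∑ a ∈ S, P (k + a)) :
    g • #S • ∑ i, P i ≤ (#S - 1) • ((∑ i, P i) * ∑ i, P i) + ∑ i, P i := by
  have hzero : autocorrelation P 0 ≤ ∑ i, P i :=
    sum_le_sum fun i _ ↦ by simpa only [add_zero] using hsq i
  calc
    g • #S • ∑ i, P i = ∑ k, g • ∑ a ∈ S, P (k + a) := by
      rw [← smul_sum, sum_sum_translate]
    _ ≤ ∑ k, (∑ a ∈ S, P (k + a)) * ∑ a ∈ S, P (k + a) := sum_le_sum fun k _ ↦ hgap k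
    _ = ∑ a ∈ S, ∑ b ∈ S, autocorrelation P (b - a) := sum_translate_mul_self P S
    _ ≤ (#S - 1) • ∑ d, autocorrelation P d + autocorrelation P 0 :=
      sum_sum_sub_le_of_card_sdiff_vadd_eq_one hS fun d hd0 hdu hdnu ↦
        sum_nonneg fun i _ ↦ hmul i d hd0 hdu hdnu
    _ ≤ (#S - 1) • ((∑ i, P i) * ∑ i, P i) + ∑ i, P i := by
      rw [sum_autocorrelation]
      gcongr

end OperatorInequality

section SpectralGap

/-- The infimum of the positive real spectrum, which for a positive operator is the spectral gap
above its kernel. The junk value of `sInf ∅` makes it `0` when there is no positive spectrum. -/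
noncomputable def spectralGap {A : Type*} [Ring A] [Algebra ℝ A] (a : A) : ℝ :=
  sInf {c : ℝ | 0 < c ∧ c ∈ spectrum ℝ a}

theorem minNonzeroEig_eq_spectralGap (T : E →L[ℂ] E) : minNonzeroEig T = spectralGap T := by
  have heig (c : ℝ) : (∃ v : E, v ≠ 0 ∧ T v = (c : ℂ) • v) ↔ c ∈ spectrum ℝ T := by
    rw [← spectrum.algebraMap_mem_iff ℂ, ContinuousLinearMap.spectrum_eq,
      ← Module.End.hasEigenvalue_iff_mem_spectrum]
    refine ⟨fun ⟨v, hv0, hv⟩ ↦ Module.End.hasEigenvalue_of_hasEigenvector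
      ⟨Module.End.mem_eigenspace_iff.mpr hv, hv0⟩, fun h ↦ ?_⟩
    obtain ⟨v, hv⟩ := h.exists_hasEigenvector
    exact ⟨v, hv.2, hv.apply_eq_smul⟩
  simp only [minNonzeroEig, spectralGap, heig]

theorem spectralGap_zero {A : Type*} [CStarAlgebra A] : spectralGap (0 : A) = 0 := by
  have hempty : {c : ℝ | 0 < c ∧ c ∈ spectrum ℝ (0 : A)} = ∅ := by
    refine Set.eq_empty_of_forall_notMem fun c ⟨hc, hmem⟩ ↦ hc.ne' ?_
    simpa using CFC.spectrum_algebraMap_subset (A := A) (p := IsSelfAdjoint) (0 : ℝ) (by simpa)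
  rw [spectralGap, hempty, Real.sInf_empty]

variable {A : Type*} [CStarAlgebra A] [PartialOrder A] [StarOrderedRing A] {a : A} {g : ℝ}

theorem smul_le_mul_self_iff_forall_mem_spectrum (ha : IsSelfAdjoint a) :
    g • a ≤ a * a ↔ ∀ c ∈ spectrum ℝ a, g * c ≤ c * c := by
  have hsmul : cfc (fun c : ℝ ↦ g * c) a = g • a := cfc_const_mul_id g a
  have hmul : cfc (fun c : ℝ ↦ c * c) a = a * a := by
    rw [cfc_mul (fun c : ℝ ↦ c) (fun c ↦ c) a, cfc_id' ℝ a]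
  rw [← hsmul, ← hmul, cfc_le_iff ..]

theorem smul_le_mul_self_of_le_spectralGap (ha : 0 ≤ a) (hg : g ≤ spectralGap a) :
    g • a ≤ a * a := by
  refine (smul_le_mul_self_iff_forall_mem_spectrum ha.isSelfAdjoint).mpr fun c hc ↦ ?_
  have hc0 : 0 ≤ c := spectrum_nonneg_of_nonneg ha hc
  rcases hc0.eq_or_lt with rfl | hpos
  · simp
  · have hgc : g ≤ c := hg.trans (csInf_le ⟨0, fun _ h ↦ h.1.le⟩ ⟨hpos, hc⟩)
    gcongr

theorem le_spectralGap_of_smul_le_mul_self (ha : 0 ≤ a) (ha0 : a ≠ 0) (h : g • a ≤ a * a) :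
    g ≤ spectralGap a := by
  refine le_csInf ?_ fun c ⟨hpos, hc⟩ ↦ le_of_mul_le_mul_right
    ((smul_le_mul_self_iff_forall_mem_spectrum ha.isSelfAdjoint).mp h c hc) hpos
  contrapose! ha0
  refine CFC.eq_zero_of_spectrum_subset_zero (R := ℝ) a fun c hc ↦ ?_
  exact ((spectrum_nonneg_of_nonneg ha hc).eq_or_lt.resolve_right
    fun hpos ↦ ha0.subset ⟨hpos, hc⟩).symm

end SpectralGap

section Chain

/-- The arc `{0, 1, …, m - 1}` of the cyclic group `Fin n`. -/
def arc (n m : ℕ) [NeZero n] : Finset (Fin n) := (range m).image (↑)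

variable {n m : ℕ} [NeZero n]

theorem injOn_natCast_range (hm : m ≤ n) : Set.InjOn ((↑) : ℕ → Fin n) (range m) :=
  (CharP.natCast_injOn_Iio (Fin n) n).mono fun _ hj ↦ (mem_range.mp hj).trans_le hm

theorem card_arc (hm : m ≤ n) : #(arc n m) = m := by
  rw [arc, card_image_of_injOn (injOn_natCast_range hm), card_range]

theorem sum_arc {M : Type*} [AddCommMonoid M] (hm : m ≤ n) (f : Fin n → M) :
    ∑ a ∈ arc n m, f a = ∑ j ∈ range m, f j :=
  sum_image (injOn_natCast_range hm)

theorem arc_sdiff_one_vadd_arc (hm : 0 < m) (hmn : m < n) :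
    arc n m \ ((1 : Fin n) +ᵥ arc n m) = {0} := by
  ext x
  simp only [arc, mem_sdiff, mem_image, mem_range, mem_vadd_finset, exists_exists_and_eq_and,
    vadd_eq_add, mem_singleton]
  constructor
  · rintro ⟨⟨j, hj, rfl⟩, hx⟩
    rcases j with _ | j
    · simp
    · exact absurd ⟨j, by omega, by rw [add_comm, Nat.cast_succ]⟩ hx
  · rintro rfl
    refine ⟨⟨0, hm, by simp⟩, fun ⟨j, hj, h0⟩ ↦ ?_⟩
    have hdvd : n ∣ 1 + j := (CharP.cast_eq_zero_iff (Fin n) n _).mp (by push_cast; exact h0)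
    exact absurd (Nat.le_of_dvd (by omega) hdvd) (by omega)

theorem disjoint_bond_of_ne {G : Type*} [AddCommGroup G] [DecidableEq G] (i : G) {d u : G}
    (hd0 : d ≠ 0) (hdu : d ≠ u) (hdnu : d ≠ -u) :
    Disjoint ({i, i + u} : Finset G) {i + d, i + d + u} := by
  have hdu0 : d + u ≠ 0 := fun h ↦ hdnu (eq_neg_of_add_eq_zero_left h)
  simp [add_assoc, hd0, hdu, hdu0]

variable {A : Type*} [CStarAlgebra A] [PartialOrder A] [StarOrderedRing A] {P : Fin n → A} {g : ℝ}

theorem knabe_operator_inequality_chain (hP : ∀ i, P i ∈ Set.Icc 0 1)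
    (hloc : ∀ i i' : Fin n,
      Disjoint ({i, i + 1} : Finset (Fin n)) ({i', i' + 1} : Finset (Fin n)) →
      Commute (P i) (P i'))
    (hm : 0 < m) (hmn : m < n)
    (hgap : ∀ k : Fin n, g ≤ spectralGap (∑ j ∈ range m, P (k + (j : Fin n)))) :
    g • m • ∑ i, P i ≤ (m - 1) • ((∑ i, P i) * ∑ i, P i) + ∑ i, P i := by
  have hsdiff : #(arc n m \ ((1 : Fin n) +ᵥ arc n m)) = 1 := by
    rw [arc_sdiff_one_vadd_arc hm hmn, card_singleton]
  have hsq (i : Fin n) : P i * P i ≤ P i := by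
    simpa only [sq, pow_one] using CStarAlgebra.pow_antitone (hP i).1 (hP i).2 one_le_two
  have hmul (i d : Fin n) (hd0 : d ≠ 0) (hd1 : d ≠ 1) (hdn1 : d ≠ -1) : 0 ≤ P i * P (i + d) :=
    (hloc i (i + d) (disjoint_bond_of_ne i hd0 hd1 hdn1)).mul_nonneg (hP i).1 (hP (i + d)).1
  have hlocal (k : Fin n) : g • ∑ a ∈ arc n m, P (k + a)
      ≤ (∑ a ∈ arc n m, P (k + a)) * ∑ a ∈ arc n m, P (k + a) := by
    refine smul_le_mul_self_of_le_spectralGap (sum_nonneg fun a _ ↦ (hP (k + a)).1) ?_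
    rw [sum_arc hmn.le fun a ↦ P (k + a)]
    exact hgap k
  simpa only [card_arc hmn.le] using knabe_operator_inequality hsdiff hsq hmul hlocal

theorem stmt_17_general (hP : ∀ i, P i ∈ Set.Icc 0 1)
    (hloc : ∀ i i' : Fin n,
      Disjoint ({i, i + 1} : Finset (Fin n)) ({i', i' + 1} : Finset (Fin n)) →
      Commute (P i) (P i'))
    {t : ℕ} (ht : 3 ≤ t) (htn : t < n)
    (hgap : ∀ k : Fin n, g ≤ spectralGap (∑ j ∈ range (t - 1), P (k + (j : Fin n)))) :
    ((t : ℝ) - 1) / ((t : ℝ) - 2) * g ≤ spectralGap (∑ i, P i) + 1 / ((t : ℝ) - 2) := by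
  have ht3 : (3 : ℝ) ≤ t := by exact_mod_cast ht
  have ht2 : 0 < (t : ℝ) - 2 := by linarith
  have hnonneg : ∀ i ∈ univ, 0 ≤ P i := fun i _ ↦ (hP i).1
  suffices (((t : ℝ) - 1) * g - 1) / ((t : ℝ) - 2) ≤ spectralGap (∑ i, P i) by
    rwa [← sub_le_iff_le_add, div_mul_eq_mul_div, ← sub_div]
  by_cases hH : ∑ i, P i = 0
  · have hg : g ≤ 0 := by
      simpa [(sum_eq_zero_iff_of_nonneg hnonneg).mp hH, spectralGap_zero] using hgap 0
    rw [hH, spectralGap_zero]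
    exact div_nonpos_of_nonpos_of_nonneg (by nlinarith) ht2.le
  · refine le_spectralGap_of_smul_le_mul_self (sum_nonneg hnonneg) hH
      (le_of_smul_le_smul_left ?_ ht2)
    have hcast1 : ((t - 1 : ℕ) : ℝ) = t - 1 := by rw [Nat.cast_sub (by omega), Nat.cast_one]
    have hcast2 : ((t - 1 - 1 : ℕ) : ℝ) = t - 2 := by
      rw [Nat.sub_sub, Nat.cast_sub (by omega), one_add_one_eq_two, Nat.cast_ofNat]
    have hop := knabe_operator_inequality_chain hP hloc (by omega) (by omega) hgap
    rw [← Nat.cast_smul_eq_nsmul ℝ, ← Nat.cast_smul_eq_nsmul ℝ, hcast1, hcast2, smul_smul,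
      mul_comm] at hop
    rwa [smul_smul, mul_div_cancel₀ _ ht2.ne', sub_smul, one_smul, sub_le_iff_le_add]

end Chain

theorem IsProjector.isStarProjection {P : E →L[ℂ] E} (hP : IsProjector P) : IsStarProjection P :=
  ⟨hP.2, hP.1⟩

/-- Knabe's theorem: let `H = Σ_{i=1}^n P_{i,i+1}` be a translationally
invariant nearest-neighbour frustration-free Hamiltonian on a periodic chain of `n` spins,
each `P_{i,i+1}` an orthogonal projector acting only on the spins `i, i+1` (so projectors
on disjoint bonds commute), all equal to the same two-body projector (translation
invariance is expressed by conjugation with a translation unitary `U`).  Let `γ` be the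
spectral gap of `H` and, for `3 ≤ t < n`, let `γ(t)` be the spectral gap of
`h_{k,t} = Σ_{i=k+1}^{k+t-1} P_{i,i+1}` (independent of `k`).  Then
`γ + 1/(t−2) ≥ ((t−1)/(t−2))·γ(t)`. -/
theorem stmt_17 {n : ℕ} [NeZero n]
    (P : Fin n → (E →L[ℂ] E))
    (hproj : ∀ i, IsProjector (P i))
    (hloc : ∀ i i' : Fin n,
      Disjoint ({i, i + 1} : Finset (Fin n)) ({i', i' + 1} : Finset (Fin n)) →
      Commute (P i) (P i'))
    (U : E →L[ℂ] E)
    (hU1 : U * ContinuousLinearMap.adjoint U = 1)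
    (hU2 : ContinuousLinearMap.adjoint U * U = 1)
    (hTI : ∀ i : Fin n, P (i + 1) = U * P i * ContinuousLinearMap.adjoint U)
    (hff : ∃ v : E, v ≠ 0 ∧ ∀ i, P i v = 0)
    (t : ℕ) (ht1 : 3 ≤ t) (ht2 : t < n)
    (γ : ℝ) (hγ : γ = minNonzeroEig (∑ i, P i))
    (γt : ℝ)
    (hγt : ∀ k : Fin n,
      γt = minNonzeroEig (∑ j ∈ Finset.range (t - 1), P (k + (j : Fin n)))) :
    ((t : ℝ) - 1) / ((t : ℝ) - 2) * γt ≤ γ + 1 / ((t : ℝ) - 2) := by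
  simp only [minNonzeroEig_eq_spectralGap] at hγ hγt
  have hP01 (i : Fin n) : P i ∈ Set.Icc 0 1 := (hproj i).isStarProjection.mem_Icc
  exact hγ ▸ stmt_17_general hP01 hloc ht1 ht2 fun k ↦ (hγt k).le
end
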